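/- Let p be a positive integer, i ∈ {1, …, p}, ε > 0, and let F : ℝ^p → ℝ be a function whose partial derivative ∂F/∂θ_i exists at every point θ with θ_i ≠ 0. Suppose (∂F/∂θ_i)(θ) · θ_i < 0 for every θ with 0 < |θ_i| < ε. If θ̂ ∈ ℝ^p is a local maximizer of F with |θ̂_i| < ε, then θ̂_i = 0. -/

import Mathlib

/-- If the `i`-th partial derivative of `F : ℝ^p → ℝ` exists and satisfies
`(∂F/∂θ_i)(θ) · θ_i < 0` whenever `0 < |θ_i| < ε`, then any local maximizer `θ̂` of `F` with
`|θ̂_i| < ε` has `θ̂_i = 0`. The `i`-th partial derivative of `F` at `θ` is the derivative of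
`s ↦ F (Function.update θ i s)` at `θ i`. -/
theorem local_max_coord_eq_zero (p : ℕ) (hp : 0 < p) (i : Fin p) (ε : ℝ) (hε : 0 < ε)
    (F : (Fin p → ℝ) → ℝ)
    (hdiff : ∀ θ : Fin p → ℝ, θ i ≠ 0 →
      DifferentiableAt ℝ (fun s : ℝ => F (Function.update θ i s)) (θ i))
    (hsign : ∀ θ : Fin p → ℝ, 0 < |θ i| → |θ i| < ε →
      deriv (fun s : ℝ => F (Function.update θ i s)) (θ i) * θ i < 0)
    (θhat : Fin p → ℝ) (hmax : IsLocalMax F θhat) (hsmall : |θhat i| < ε) :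
    θhat i = 0 := by
  by_contra h
  have h1 := hsign θhat (abs_pos.mpr h) hsmall
  have hc : ContinuousAt (fun s : ℝ => Function.update θhat i s) (θhat i) :=
    (continuous_const.update i continuous_id).continuousAt
  have hm : IsLocalMax (fun s : ℝ => F (Function.update θhat i s)) (θhat i) := by
    have ht : Filter.Tendsto (fun s : ℝ => Function.update θhat i s) (nhds (θhat i))
        (nhds θhat) := by
      have h2 := hc.tendsto
      simp only [Function.update_eq_self] at h2
      exact h2
    have h3 := ht.eventually hmax
    unfold IsLocalMax IsMaxFilter
    simp only [Function.update_eq_self]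
    exact h3
  rw [hm.deriv_eq_zero, zero_mul] at h1
  exact lt_irrefl _ h1
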